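/- Let G and Γ be countable groups with pmp actions G ↷ (X, μ) and Γ ↷ (X, μ) on the same standard probability space having the same orbits μ-almost-everywhere (for μ-a.e. x, G·x = Γ·x). Let F be a sub-σ-algebra that is invariant under both actions. Assume there exist maps c_Γ : X × G → Γ and c_G : X × Γ → G such that for each g ∈ G the map x ↦ c_Γ(x, g) is F-measurable, for each γ ∈ Γ the map x ↦ c_G(x, γ) is F-measurable, and for μ-almost-every x ∈ X: g·x = c_Γ(x, g)·x for all g ∈ G and γ·x = c_G(x, γ)·x for all γ ∈ Γ. Then rh_G(X, μ | F) = rh_Γ(X, μ | F), where each Rokhlin entropy is computed with respect to the corresponding action and its invariant σ-algebra. -/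

import Mathlib

open MeasureTheory Set Function
open scoped ENNReal symmDiff

/-- A set in a measurable space is *analytic* if it is the image of a Borel subset of a
standard Borel space under a Borel (measurable) map. -/
def IsAnalyticS {W : Type*} [MeasurableSpace W] (A : Set W) : Prop :=
  ∃ (Z : Type) (mZ : MeasurableSpace Z), @StandardBorelSpace Z mZ ∧
    ∃ (B : Set Z) (f : Z → W), MeasurableSet[mZ] B ∧ @Measurable Z W mZ _ f ∧ f '' B = A

/-- The smallest `G`-invariant sub-σ-algebra containing the collection `ξ`. -/
def sigmaG (G : Type*) {X : Type*} [Group G] [MulAction G X] (ξ : Set (Set X)) :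
    MeasurableSpace X :=
  MeasurableSpace.generateFrom {B | ∃ (g : G), ∃ A ∈ ξ, B = (fun x => g • x) ⁻¹' A}

/-- The σ-algebra of `G`-invariant measurable sets. -/
def invSigma (G X : Type*) [Group G] [MulAction G X] [MeasurableSpace X] :
    MeasurableSpace X :=
  MeasurableSpace.generateFrom {A | MeasurableSet A ∧ ∀ g : G, (fun x => g • x) ⁻¹' A = A}

/-- Conditional Shannon entropy `H_μ(α | m)` of a countable partition `α` given a
sub-σ-algebra `m`, valued in `[0,∞]`. -/
noncomputable def condEnt {X : Type*} (m : MeasurableSpace X) [mX : MeasurableSpace X]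
    (μ : Measure X) {ι : Type*} (α : ι → Set X) : ℝ≥0∞ :=
  ∫⁻ x, ∑' i, ENNReal.ofReal
    (Real.negMulLog ((μ[(α i).indicator (fun _ => (1 : ℝ)) | m]) x)) ∂μ

/-- Shannon entropy `H_μ(α)` of a countable partition. -/
noncomputable def shEnt {X : Type*} [MeasurableSpace X] (μ : Measure X)
    {ι : Type*} (α : ι → Set X) : ℝ≥0∞ :=
  ∑' i, ENNReal.ofReal (Real.negMulLog (μ (α i)).toReal)

/-- `α` is a countable Borel partition of `X` (indexed by `ℕ`, cells may be empty). -/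
def IsPartition {X : Type*} [MeasurableSpace X] (α : ℕ → Set X) : Prop :=
  (∀ i, MeasurableSet (α i)) ∧ Pairwise (Function.onFun Disjoint α) ∧ (⋃ i, α i) = univ

/-- Every set of `ξ` agrees with an `m`-measurable set modulo `μ`-null sets. -/
def SubsetMod {X : Type*} (m : MeasurableSpace X) [mX : MeasurableSpace X] (μ : Measure X)
    (ξ : Set (Set X)) : Prop :=
  ∀ A ∈ ξ, ∃ B, MeasurableSet[m] B ∧ μ (A ∆ B) = 0

/-- Outer Rokhlin entropy `rh_{G,μ}(ξ | F)`. -/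
noncomputable def outerRokhlin (G : Type*) {X : Type*} (ξ : Set (Set X))
    (F : MeasurableSpace X) [Group G] [MulAction G X] [mX : MeasurableSpace X]
    (μ : Measure X) : ℝ≥0∞ :=
  sInf { h | ∃ α : ℕ → Set X, IsPartition α ∧
      SubsetMod (sigmaG G (Set.range α) ⊔ F ⊔ invSigma G X) μ ξ ∧
      h = condEnt (F ⊔ invSigma G X) μ α }

/-- Rokhlin entropy `rh_G(X, μ | F)`. -/
noncomputable def rokhlin (G : Type*) {X : Type*} (F : MeasurableSpace X) [Group G]
    [MulAction G X] [mX : MeasurableSpace X] (μ : Measure X) : ℝ≥0∞ :=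
  outerRokhlin G {A | MeasurableSet A} F μ

/-- Outer Rokhlin entropy `rh_{G,μ}(S | F)` of a sub-σ-algebra `S`. -/
noncomputable def outerRokhlinAlg (G : Type*) {X : Type*} (S F : MeasurableSpace X) [Group G]
    [MulAction G X] [mX : MeasurableSpace X] (μ : Measure X) : ℝ≥0∞ :=
  outerRokhlin G {A | MeasurableSet[S] A} F μ

/-- The action of `G` on `(X, μ)` is probability-measure-preserving. -/
def IsPmp (G : Type*) {X : Type*} [Group G] [MulAction G X] [MeasurableSpace X]
    (μ : Measure X) : Prop :=
  ∀ g : G, MeasurePreserving (fun x => g • x) μ μ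

/-- Aperiodicity: μ-almost-every `G`-orbit is infinite. -/
def Aperiodic (G : Type*) {X : Type*} [Group G] [MulAction G X] [MeasurableSpace X]
    (μ : Measure X) : Prop :=
  ∀ᵐ x ∂μ, (MulAction.orbit G x).Infinite

/-- Ergodicity of a measure: every invariant Borel set is null or conull. -/
def IsErgodicInv (G : Type*) {X : Type*} [Group G] [MulAction G X] [MeasurableSpace X]
    (ν : Measure X) : Prop :=
  ∀ A : Set X, MeasurableSet A → (∀ g : G, (fun x => g • x) ⁻¹' A = A) → ν A = 0 ∨ ν A = 1

/-- `F` is a `G`-invariant σ-algebra. -/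
def InvariantAlg (G : Type*) {X : Type*} (F : MeasurableSpace X) [Group G] [MulAction G X] :
    Prop :=
  ∀ (g : G) (A : Set X), MeasurableSet[F] A → MeasurableSet[F] ((fun x => g • x) ⁻¹' A)

/-- `F` is countably generated. -/
def CountablyGen {X : Type*} (F : MeasurableSpace X) : Prop :=
  ∃ S : Set (Set X), S.Countable ∧ F = MeasurableSpace.generateFrom S

/-- `π` is an ergodic decomposition map for `μ`. -/
def IsErgDecomp (G : Type*) {X : Type*} [Group G] [MulAction G X] [MeasurableSpace X]
    (μ : Measure X) (π : X → Measure X) : Prop :=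
  Measurable π ∧
  (∀ x, IsProbabilityMeasure (π x) ∧ IsPmp G (π x) ∧ IsErgodicInv G (π x)) ∧
  (∀ (g : G) (x : X), π (g • x) = π x) ∧
  (∀ ν : Measure X, IsProbabilityMeasure ν → IsPmp G ν → IsErgodicInv G ν →
      ν {x | π x = ν} = 1) ∧
  (∀ B : Set X, MeasurableSet B → μ B = ∫⁻ x, π x B ∂μ)

/-!
If `c : X → Γ` takes each value on an `F`-measurable set and `g • x = c x • x` for almost every `x`,
then `g⁻¹ A` agrees almost everywhere with `⋃ γ, {c = γ} ∩ γ⁻¹ A`. Hence, up to null sets, the two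
groups generate the same σ-algebra from a given partition together with `F`, and a set invariant
under one group is invariant under the other. Since conditional entropy and the generating condition
only see σ-algebras up to null sets, the two infima range over the same values.
-/

section EventuallyMeasurable

variable {X : Type*} {l : Filter X} [CountableInterFilter l]

lemma eventuallyMeasurableSpace_le_iff {m n : MeasurableSpace X} :
    eventuallyMeasurableSpace m l ≤ eventuallyMeasurableSpace n l ↔
      m ≤ eventuallyMeasurableSpace n l := by
  refine ⟨le_eventuallyMeasurableSpace.trans, fun h s hs => ?_⟩
  obtain ⟨t, ht, hst⟩ := hs
  exact EventuallyMeasurableSet.congr (h t ht) hst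

lemma eventuallyMeasurableSpace_mono {m n : MeasurableSpace X} (h : m ≤ n) :
    eventuallyMeasurableSpace m l ≤ eventuallyMeasurableSpace n l :=
  eventuallyMeasurableSpace_le_iff.2 (h.trans le_eventuallyMeasurableSpace)

lemma eventuallyMeasurableSpace_sup_le {m₁ m₂ n₁ n₂ : MeasurableSpace X}
    (h₁ : eventuallyMeasurableSpace m₁ l ≤ eventuallyMeasurableSpace n₁ l)
    (h₂ : eventuallyMeasurableSpace m₂ l ≤ eventuallyMeasurableSpace n₂ l) :
    eventuallyMeasurableSpace (m₁ ⊔ m₂) l ≤ eventuallyMeasurableSpace (n₁ ⊔ n₂) l := by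
  rw [eventuallyMeasurableSpace_le_iff] at h₁ h₂ ⊢
  exact sup_le (h₁.trans (eventuallyMeasurableSpace_mono le_sup_left))
    (h₂.trans (eventuallyMeasurableSpace_mono le_sup_right))

lemma eventuallyMeasurableSpace_sup_congr {m₁ m₂ n₁ n₂ : MeasurableSpace X}
    (h₁ : eventuallyMeasurableSpace m₁ l = eventuallyMeasurableSpace n₁ l)
    (h₂ : eventuallyMeasurableSpace m₂ l = eventuallyMeasurableSpace n₂ l) :
    eventuallyMeasurableSpace (m₁ ⊔ m₂) l = eventuallyMeasurableSpace (n₁ ⊔ n₂) l :=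
  le_antisymm (eventuallyMeasurableSpace_sup_le h₁.le h₂.le)
    (eventuallyMeasurableSpace_sup_le h₁.ge h₂.ge)

end EventuallyMeasurable

section ConditionalEntropy

variable {X : Type*} {m n mX : MeasurableSpace X} {μ : Measure X}

lemma condExp_ae_eq_of_le_of_le_eventuallyMeasurableSpace
    {E : Type*} [NormedAddCommGroup E] [NormedSpace ℝ E] [CompleteSpace E]
    (hn : n ≤ mX) (hmn : m ≤ n) [SigmaFinite (μ.trim (hmn.trans hn))]
    (h : n ≤ eventuallyMeasurableSpace m (ae μ)) (f : X → E) :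
    μ[f | m] =ᵐ[μ] μ[f | n] := by
  by_cases hf : Integrable f μ
  · have : SigmaFinite (μ.trim hn) := sigmaFiniteTrim_mono hn hmn
    refine ae_eq_condExp_of_forall_setIntegral_eq hn hf
      (fun _ _ _ => integrable_condExp.integrableOn) (fun s hs _ => ?_)
      (stronglyMeasurable_condExp.mono hmn).aestronglyMeasurable
    obtain ⟨t, ht, hst⟩ := h s hs
    calc ∫ x in s, (μ[f | m]) x ∂μ = ∫ x in t, (μ[f | m]) x ∂μ := setIntegral_congr_set hst
      _ = ∫ x in t, f x ∂μ := setIntegral_condExp (hmn.trans hn) hf ht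
      _ = ∫ x in s, f x ∂μ := (setIntegral_congr_set hst).symm
  · rw [condExp_of_not_integrable hf, condExp_of_not_integrable hf]

lemma condExp_ae_eq_of_eventuallyMeasurableSpace_eq
    {E : Type*} [NormedAddCommGroup E] [NormedSpace ℝ E] [CompleteSpace E]
    (hm : m ≤ mX) (hn : n ≤ mX) [SigmaFinite (μ.trim hm)] [SigmaFinite (μ.trim hn)]
    (h : eventuallyMeasurableSpace m (ae μ) = eventuallyMeasurableSpace n (ae μ)) (f : X → E) :
    μ[f | m] =ᵐ[μ] μ[f | n] := by
  have hm_sup : m ⊔ n ≤ eventuallyMeasurableSpace m (ae μ) :=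
    sup_le le_eventuallyMeasurableSpace (eventuallyMeasurableSpace_le_iff.1 h.ge)
  have hn_sup : m ⊔ n ≤ eventuallyMeasurableSpace n (ae μ) := h ▸ hm_sup
  exact (condExp_ae_eq_of_le_of_le_eventuallyMeasurableSpace
      (sup_le hm hn) le_sup_left hm_sup f).trans
    (condExp_ae_eq_of_le_of_le_eventuallyMeasurableSpace
      (sup_le hm hn) le_sup_right hn_sup f).symm

lemma condEnt_congr (hm : m ≤ mX) (hn : n ≤ mX)
    [SigmaFinite (μ.trim hm)] [SigmaFinite (μ.trim hn)]
    (h : eventuallyMeasurableSpace m (ae μ) = eventuallyMeasurableSpace n (ae μ))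
    {ι : Type*} [Countable ι] (α : ι → Set X) :
    condEnt m μ α = condEnt n μ α := by
  refine lintegral_congr_ae ?_
  filter_upwards [ae_all_iff.2 fun i => condExp_ae_eq_of_eventuallyMeasurableSpace_eq hm hn h
    ((α i).indicator fun _ => (1 : ℝ))] with x hx
  simp only [hx]

lemma subsetMod_iff_eventuallyMeasurableSet {ξ : Set (Set X)} :
    SubsetMod m μ ξ ↔ ∀ A ∈ ξ, EventuallyMeasurableSet m (ae μ) A := by
  simp only [SubsetMod, measure_symmDiff_eq_zero_iff]
  rfl

lemma subsetMod_congr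
    (h : eventuallyMeasurableSpace m (ae μ) = eventuallyMeasurableSpace n (ae μ))
    (ξ : Set (Set X)) : SubsetMod m μ ξ ↔ SubsetMod n μ ξ := by
  simp only [subsetMod_iff_eventuallyMeasurableSet, EventuallyMeasurableSet]
  rw [h]

end ConditionalEntropy

section Expressible

/-- A self-map `T` of `X` is `F`-expressible by the action of `Γ` if there is a choice `c` of group
elements with `T x = c x • x` almost everywhere. Measurability of `c` is imposed on its fibres, the
pieces on which `T` acts as a single element, so that `Γ` needs no σ-algebra. -/
def IsExpressible (Γ : Type*) {X : Type*} [SMul Γ X] (F : MeasurableSpace X) [MeasurableSpace X]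
    (μ : Measure X) (T : X → X) : Prop :=
  ∃ c : X → Γ, (∀ γ, MeasurableSet[F] {x | c x = γ}) ∧ ∀ᵐ x ∂μ, T x = c x • x

variable {Γ X : Type*} [SMul Γ X] {F m mX : MeasurableSpace X} {μ : Measure X} {T : X → X}

lemma IsExpressible.mono (hT : IsExpressible Γ F μ T) (h : F ≤ m) : IsExpressible Γ m μ T :=
  let ⟨c, hc, hTc⟩ := hT
  ⟨c, fun γ => h _ (hc γ), hTc⟩

lemma IsExpressible.ae_mem_range_smul (hT : IsExpressible Γ F μ T) :
    ∀ᵐ x ∂μ, T x ∈ range fun γ : Γ => γ • x :=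
  let ⟨c, _, hTc⟩ := hT
  hTc.mono fun x hx => ⟨c x, hx.symm⟩

lemma IsExpressible.eventuallyMeasurableSet_preimage [Countable Γ]
    (hT : IsExpressible Γ F μ T) {A : Set X}
    (hA : ∀ γ : Γ, MeasurableSet[F] ((fun x => γ • x) ⁻¹' A)) :
    EventuallyMeasurableSet F (ae μ) (T ⁻¹' A) := by
  obtain ⟨c, hc, hTc⟩ := hT
  refine ⟨⋃ γ, {x | c x = γ} ∩ (fun x => γ • x) ⁻¹' A,
    MeasurableSet.iUnion fun γ => (hc γ).inter (hA γ), ?_⟩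
  rw [Filter.eventuallyEq_set]
  filter_upwards [hTc] with x hx
  simp [hx]

end Expressible

section OrbitEquivalence

variable {G Γ X : Type*} [Group G] [Group Γ] [MulAction G X] [MulAction Γ X]
  {F : MeasurableSpace X} [mX : MeasurableSpace X] {μ : Measure X}

lemma sigmaG_sup_le_eventuallyMeasurableSpace [Countable Γ]
    (hG : ∀ g : G, IsExpressible Γ F μ (g • ·)) (ξ : Set (Set X)) :
    sigmaG G ξ ⊔ F ≤ eventuallyMeasurableSpace (sigmaG Γ ξ ⊔ F) (ae μ) := by
  refine sup_le (MeasurableSpace.generateFrom_le ?_)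
    (le_sup_right.trans le_eventuallyMeasurableSpace)
  rintro _ ⟨g, A, hA, rfl⟩
  have hγA (γ : Γ) : MeasurableSet[sigmaG Γ ξ] ((fun x => γ • x) ⁻¹' A) :=
    MeasurableSpace.measurableSet_generateFrom ⟨γ, A, hA, rfl⟩
  exact ((hG g).mono le_sup_right).eventuallyMeasurableSet_preimage
    fun γ => (le_sup_left : sigmaG Γ ξ ≤ sigmaG Γ ξ ⊔ F) _ (hγA γ)

lemma eventuallyMeasurableSpace_sigmaG_sup_eq [Countable G] [Countable Γ]
    (hG : ∀ g : G, IsExpressible Γ F μ (g • ·)) (hΓ : ∀ γ : Γ, IsExpressible G F μ (γ • ·))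
    (ξ : Set (Set X)) :
    eventuallyMeasurableSpace (sigmaG G ξ ⊔ F) (ae μ) =
      eventuallyMeasurableSpace (sigmaG Γ ξ ⊔ F) (ae μ) :=
  le_antisymm
    (eventuallyMeasurableSpace_le_iff.2 (sigmaG_sup_le_eventuallyMeasurableSpace hG ξ))
    (eventuallyMeasurableSpace_le_iff.2 (sigmaG_sup_le_eventuallyMeasurableSpace hΓ ξ))

lemma invSigma_le : invSigma G X ≤ mX :=
  MeasurableSpace.generateFrom_le fun _ hA => hA.1

lemma measurableSet_invSigma_iInter_preimage_smul [Countable Γ] [MeasurableConstSMul Γ X]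
    {A : Set X} (hA : MeasurableSet A) :
    MeasurableSet[invSigma Γ X] (⋂ γ : Γ, (fun x => γ • x) ⁻¹' A) := by
  refine MeasurableSpace.measurableSet_generateFrom
    ⟨MeasurableSet.iInter fun γ => measurable_const_smul γ hA, fun δ => ?_⟩
  ext x
  simp only [mem_preimage, mem_iInter, smul_smul]
  exact (Equiv.mulRight δ).forall_congr fun γ => Iff.rfl

lemma invSigma_le_eventuallyMeasurableSpace [Countable Γ] [MeasurableConstSMul Γ X]
    (hΓ : ∀ γ : Γ, ∀ᵐ x ∂μ, γ • x ∈ MulAction.orbit G x) :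
    invSigma G X ≤ eventuallyMeasurableSpace (invSigma Γ X) (ae μ) := by
  refine MeasurableSpace.generateFrom_le ?_
  rintro A ⟨hA, hA_inv⟩
  refine ⟨_, measurableSet_invSigma_iInter_preimage_smul (Γ := Γ) hA, ?_⟩
  rw [Filter.eventuallyEq_set]
  filter_upwards [ae_all_iff.2 hΓ] with x hx
  have smul_mem_iff (γ : Γ) : γ • x ∈ A ↔ x ∈ A := by
    obtain ⟨g, hg⟩ := hx γ
    rw [← hg]
    exact Set.ext_iff.1 (hA_inv g) x
  simp only [mem_iInter, mem_preimage, smul_mem_iff, forall_const]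

lemma eventuallyMeasurableSpace_invSigma_eq [Countable G] [Countable Γ]
    [MeasurableConstSMul G X] [MeasurableConstSMul Γ X]
    (hG : ∀ g : G, ∀ᵐ x ∂μ, g • x ∈ MulAction.orbit Γ x)
    (hΓ : ∀ γ : Γ, ∀ᵐ x ∂μ, γ • x ∈ MulAction.orbit G x) :
    eventuallyMeasurableSpace (invSigma G X) (ae μ) =
      eventuallyMeasurableSpace (invSigma Γ X) (ae μ) :=
  le_antisymm
    (eventuallyMeasurableSpace_le_iff.2 (invSigma_le_eventuallyMeasurableSpace hΓ))
    (eventuallyMeasurableSpace_le_iff.2 (invSigma_le_eventuallyMeasurableSpace hG))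

lemma IsPmp.measurableConstSMul (h : IsPmp G μ) : MeasurableConstSMul G X :=
  ⟨fun g => (h g).measurable⟩

theorem statement17_general [Countable G] [Countable Γ]
    [MeasurableConstSMul G X] [MeasurableConstSMul Γ X] [IsFiniteMeasure μ] (hF : F ≤ mX)
    (hG : ∀ g : G, IsExpressible Γ F μ (g • ·)) (hΓ : ∀ γ : Γ, IsExpressible G F μ (γ • ·))
    (ξ : Set (Set X)) :
    outerRokhlin G ξ F μ = outerRokhlin Γ ξ F μ := by
  have hinv := eventuallyMeasurableSpace_invSigma_eq
    (fun g => (hG g).ae_mem_range_smul) (fun γ => (hΓ γ).ae_mem_range_smul)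
  have hgen (α : ℕ → Set X) :=
    subsetMod_congr (eventuallyMeasurableSpace_sup_congr
      (eventuallyMeasurableSpace_sigmaG_sup_eq hG hΓ (range α)) hinv) ξ
  have hent (α : ℕ → Set X) : condEnt (F ⊔ invSigma G X) μ α = condEnt (F ⊔ invSigma Γ X) μ α :=
    condEnt_congr (sup_le hF invSigma_le) (sup_le hF invSigma_le)
      (eventuallyMeasurableSpace_sup_congr rfl hinv) α
  simp only [outerRokhlin, hgen, hent]

end OrbitEquivalence

/-- Proposition 8.4, restricted orbit equivalence: if two pmp actions
of countable groups `G` and `Γ` on `(X, μ)` have the same orbits a.e. and the orbit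
change-of-group cocycles are `F`-measurable, then the relative Rokhlin entropies
coincide. -/
theorem statement17 {G Γ X : Type*} (F : MeasurableSpace X)
    [Group G] [Countable G] [Group Γ] [Countable Γ]
    [mX : MeasurableSpace X] [StandardBorelSpace X]
    [MulAction G X] [MulAction Γ X]
    (μ : Measure X) [IsProbabilityMeasure μ]
    (hpmpG : IsPmp G μ) (hpmpΓ : IsPmp Γ μ)
    (horb : ∀ᵐ x ∂μ, MulAction.orbit G x = MulAction.orbit Γ x)
    (hFle : F ≤ mX) (hFG : InvariantAlg G F) (hFΓ : InvariantAlg Γ F)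
    (cΓ : X → G → Γ) (cG : X → Γ → G)
    (hcΓm : ∀ (g : G) (γ : Γ), MeasurableSet[F] {x : X | cΓ x g = γ})
    (hcGm : ∀ (γ : Γ) (g : G), MeasurableSet[F] {x : X | cG x γ = g})
    (hcΓ : ∀ g : G, ∀ᵐ x ∂μ, g • x = (cΓ x g) • x)
    (hcG : ∀ γ : Γ, ∀ᵐ x ∂μ, γ • x = (cG x γ) • x) :
    rokhlin G F μ = rokhlin Γ F μ := by
  have := hpmpG.measurableConstSMul
  have := hpmpΓ.measurableConstSMul
  exact statement17_general hFle (fun g => ⟨(cΓ · g), hcΓm g, hcΓ g⟩)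
    (fun γ => ⟨(cG · γ), hcGm γ, hcG γ⟩) _
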